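/- Let Φ = A_{n−1}, let I, J ⊆ Δ, and let λ be an integral Φ_I-regular weight with Φ_{λ̄} = Φ_J. Let i_1, …, i_{m̄} be a permutation of {1, …, m̄} such that n̄_{i_1} ≥ … ≥ n̄_{i_{m̄}}, and set b_l = a_{i_l} for 1 ≤ l ≤ m̄. Then there exists a Φ_I-regular weight λ̂ = (b_1, …, b_{q_1}, λ̂_{q_1+1}, …, λ̂_n) such that λ ⟷ λ̂. -/

import Mathlib

namespace JantzenBlocksA

open scoped Classical

/-- The weight space `ℝ^n`. -/
abbrev V (n : ℕ) := Fin n → ℝ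

noncomputable section

/-- The standard inner product on `ℝ^n`. -/
def inn {n : ℕ} (x y : V n) : ℝ := ∑ i, x i * y i

/-- The standard basis vector `e i`. -/
def ee {n : ℕ} (i : Fin n) : V n := Pi.single i 1

/-- The reflection `s_v` in the vector `v`. -/
def sRefl {n : ℕ} (v x : V n) : V n := x - (2 * inn x v / inn v v) • v

/-- The root system `Φ = A_{n-1} = {e_i - e_j : i ≠ j}`. -/
def PhiA (n : ℕ) : Set (V n) := {v | ∃ i j : Fin n, i ≠ j ∧ v = ee i - ee j}

/-- The positive system `Φ⁺ = {e_i - e_j : i < j}`. -/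
def PhiAPos (n : ℕ) : Set (V n) := {v | ∃ i j : Fin n, i < j ∧ v = ee i - ee j}

/-- The simple root `α_{i+1} = e_{i+1} - e_{i+2}` (`0`-based index `i < n-1`). -/
def alphaA (n : ℕ) (i : Fin n) : V n :=
  if h : i.1 + 1 < n then ee i - ee ⟨i.1 + 1, h⟩ else 0

/-- The subsystem `Φ_I` generated by the simple roots indexed by `I`. -/
def PhiI (n : ℕ) (I : Finset (Fin n)) : Set (V n) :=
  PhiA n ∩ (Submodule.span ℝ (alphaA n '' (I : Set (Fin n))) : Set (V n))

/-- `λ` is `Φ_I`-regular. -/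
def RegI (n : ℕ) (I : Finset (Fin n)) (lam : V n) : Prop :=
  ∀ β ∈ PhiI n I, inn lam β ≠ 0

/-- `λ` is integral. -/
def IntegralW (n : ℕ) (lam : V n) : Prop :=
  ∀ β ∈ PhiA n, ∃ k : ℤ, 2 * inn lam β / inn β β = (k : ℝ)

/-- `λ` is dominant. -/
def DominantW (n : ℕ) (lam : V n) : Prop :=
  ∀ i : Fin n, 0 ≤ inn lam (alphaA n i)

/-- `μ` lies in the `W_I`-orbit of `λ`. -/
def WIOrb (n : ℕ) (I : Finset (Fin n)) : V n → V n → Prop :=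
  Relation.ReflTransGen (fun x y => ∃ i ∈ I, y = sRefl (alphaA n i) x)

/-- `μ` lies in the `W`-orbit of `λ`. -/
def WOrb (n : ℕ) : V n → V n → Prop := WIOrb n Finset.univ

/-- `λ ∈ Λ_I⁺`. -/
def LamIPlus (n : ℕ) (I : Finset (Fin n)) (lam : V n) : Prop :=
  IntegralW n lam ∧ ∀ i ∈ I, 0 < inn lam (alphaA n i)

/-- The sorted list `q_1 < … < q_{m-1}` (`1`-based values) of indices of `Δ∖I`. -/
def QlistA (n : ℕ) (I : Finset (Fin n)) : List ℕ :=
  (((Finset.univ.filter (fun j : Fin n => j.1 + 1 < n)) \ I).sort (· ≤ ·)).map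
    (fun j => j.1 + 1)

/-- The number `m` of segments determined by `I`. -/
def mvalA (n : ℕ) (I : Finset (Fin n)) : ℕ := (QlistA n I).length + 1

/-- `q_s`, with the conventions `q_0 = 0` and `q_m = n`. -/
def qA (n : ℕ) (I : Finset (Fin n)) (s : ℕ) : ℕ :=
  if s = 0 then 0 else if s < mvalA n I then (QlistA n I).getD (s - 1) 0 else n

/-- The multiplicity `n̄_t` of the `t`-th distinct value of a dominant weight. -/
def nbarA (n : ℕ) (J : Finset (Fin n)) (t : ℕ) : ℕ := qA n J t - qA n J (t - 1)

/-- `a_t = λ̄_{q̄_t}`: the `t`-th distinct entry value of the dominant weight `λ̄`. -/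
def aA (n : ℕ) (J : Finset (Fin n)) (lbar : V n) (t : ℕ) : ℝ :=
  if h : qA n J t - 1 < n then lbar ⟨qA n J t - 1, h⟩ else 0

/-- `β` is a linked root of `λ` (type `A`: no exceptional cases). -/
def LinkedA (n : ℕ) (I : Finset (Fin n)) (lam β : V n) : Prop :=
  RegI n I lam ∧ β ∈ PhiAPos n ∧ β ∉ PhiI n I ∧
  RegI n I (sRefl β lam) ∧ sRefl β lam ≠ lam

/-- One step in a connecting chain. -/
def ConnStepA (n : ℕ) (I : Finset (Fin n)) (x y : V n) : Prop :=
  RegI n I x ∧ RegI n I y ∧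
  (WIOrb n I x y ∨ ∃ β : V n, LinkedA n I x β ∧ WIOrb n I (sRefl β x) y)

/-- `λ ⟷ μ`: `λ` and `μ` are connected. -/
def ConnA (n : ℕ) (I : Finset (Fin n)) (lam mu : V n) : Prop :=
  RegI n I lam ∧ RegI n I mu ∧ Relation.ReflTransGen (ConnStepA n I) lam mu

/-- The set `^IW^Jλ̄ = Wλ̄ ∩ Λ_I⁺`. -/
def IWJsetA (n : ℕ) (I : Finset (Fin n)) (lbar : V n) : Set (V n) :=
  {mu | WOrb n lbar mu ∧ LamIPlus n I mu}

end

/-!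
In type `A`, `Φ_I`-regularity says that the entries of a weight are pairwise distinct within each
segment. Fill the positions of the first segment from left to right. To bring a value `b` to
position `p` of a regular weight `x`, it suffices that `b` occurs in `x` at least as often as `x p`:
if `b` already lies in the segment of `p`, an element of `W_I` moves it to `p`; otherwise a
pigeonhole argument yields a segment containing `b` but not `x p`, and exchanging the two entries is
the reflection in a linked root. When the values are used in order of decreasing multiplicity, this
condition holds at every step.
-/

section Roots

variable {n : ℕ} {i j : Fin n} {x : V n}

theorem inn_ee_sub_ee (x : V n) (i j : Fin n) : inn x (ee i - ee j) = x i - x j := by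
  simp [inn, ee, mul_sub, Finset.sum_sub_distrib, Pi.single_apply]

theorem inn_eq_zero_of_mem_span {S : Set (V n)} {v : V n} (hS : ∀ w ∈ S, inn x w = 0)
    (hv : v ∈ Submodule.span ℝ S) : inn x v = 0 :=
  have hle : Submodule.span ℝ S ≤ LinearMap.ker (dotProductBilin ℝ ℝ x) :=
    Submodule.span_le.mpr hS
  hle hv

theorem sRefl_ee_sub_ee (x : V n) (hij : i ≠ j) :
    sRefl (ee i - ee j) x = x ∘ Equiv.swap i j := by
  have hnorm : inn (ee i - ee j : V n) (ee i - ee j) = 2 := by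
    rw [inn_ee_sub_ee]
    simp [ee, hij, hij.symm, one_add_one_eq_two]
  funext k
  simp only [sRefl, hnorm, inn_ee_sub_ee, Pi.sub_apply, Pi.smul_apply, smul_eq_mul,
    Function.comp_apply]
  rcases eq_or_ne k i with rfl | hki
  · simp [ee, hij]
  rcases eq_or_ne k j with rfl | hkj
  · simp [ee, hij.symm]
  · simp [ee, hki, hkj, Equiv.swap_apply_of_ne_of_ne]

theorem alphaA_of_covBy (hij : i ⋖ j) : alphaA n i = ee i - ee j := by
  have hval : i.1 + 1 = j.1 := Nat.covBy_iff_add_one_eq.mp (Fin.covBy_iff.mp hij)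
  simp [alphaA, hval]

theorem alphaA_eq_zero_or_exists_covBy (i : Fin n) : alphaA n i = 0 ∨ ∃ j, i ⋖ j := by
  by_cases hi : i.1 + 1 < n
  · exact Or.inr ⟨⟨i.1 + 1, hi⟩, Fin.covBy_iff.mpr (Nat.covBy_iff_add_one_eq.mpr rfl)⟩
  · exact Or.inl (dif_neg hi)

theorem WIOrb.exists_eq_comp_perm {I : Finset (Fin n)} {y : V n} (h : WIOrb n I x y) :
    ∃ σ : Equiv.Perm (Fin n), y = x ∘ σ := by
  induction h with
  | refl => exact ⟨1, rfl⟩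
  | tail _ hstep ih =>
    obtain ⟨σ, rfl⟩ := ih
    obtain ⟨i, _, rfl⟩ := hstep
    rcases alphaA_eq_zero_or_exists_covBy i with hi | ⟨j, hij⟩
    · exact ⟨σ, by simp [hi, sRefl]⟩
    · exact ⟨σ * Equiv.swap i j, by rw [alphaA_of_covBy hij, sRefl_ee_sub_ee _ hij.ne]; rfl⟩

theorem DominantW.antitone (hx : DominantW n x) : Antitone x :=
  antitone_of_succ_le fun i hi => by
    have hpair := hx i
    rw [alphaA_of_covBy (Order.covBy_succ_of_not_isMax hi), inn_ee_sub_ee] at hpair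
    exact sub_nonneg.mp hpair

end Roots

section Segments

variable {n : ℕ} {I : Finset (Fin n)} {i j k : Fin n} {x : V n}

/-- Two coordinates lie in the same segment determined by `I`: segments are the classes of the
equivalence relation generated by joining the two coordinates of each simple root in `I`. -/
def SameSegment (I : Finset (Fin n)) : Fin n → Fin n → Prop :=
  Relation.EqvGen fun i j => i ∈ I ∧ i ⋖ j

theorem SameSegment.refl (i : Fin n) : SameSegment I i i := Relation.EqvGen.refl i

theorem SameSegment.symm (h : SameSegment I i j) : SameSegment I j i := Relation.EqvGen.symm _ _ h

theorem SameSegment.trans (hij : SameSegment I i j) (hjk : SameSegment I j k) :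
    SameSegment I i k :=
  Relation.EqvGen.trans _ _ _ hij hjk

theorem sameSegment_of_covBy (hi : i ∈ I) (hij : i ⋖ j) : SameSegment I i j :=
  Relation.EqvGen.rel _ _ ⟨hi, hij⟩

theorem sameSegment_of_Ico_subset (hij : i ≤ j) (hI : ∀ k ∈ Set.Ico i j, k ∈ I) :
    SameSegment I i j := by
  have hchain : Relation.ReflTransGen (fun i j => i ∈ I ∧ i ⋖ j) i j :=
    reflTransGen_of_succ_of_le _
      (fun k hk => ⟨hI k hk, Order.covBy_succ_of_not_isMax hk.2.not_isMax⟩) hij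
  exact Relation.EqvGen.reflTransGen_le_eqvGen _ i j hchain

theorem SameSegment.apply_eq (hx : ∀ k ∈ I, inn x (alphaA n k) = 0) (h : SameSegment I i j) :
    x i = x j := by
  induction h with
  | rel i j hij =>
    have hpair := hx i hij.1
    rwa [alphaA_of_covBy hij.2, inn_ee_sub_ee, sub_eq_zero] at hpair
  | refl => rfl
  | symm _ _ _ ih => exact ih.symm
  | trans _ _ _ _ _ ih₁ ih₂ => exact ih₁.trans ih₂

theorem ee_sub_ee_mem_span_iff :
    ee i - ee j ∈ Submodule.span ℝ (alphaA n '' (I : Set (Fin n))) ↔ SameSegment I i j := by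
  constructor
  · intro hmem
    -- The indicator of the segment of `i` is orthogonal to every simple root in `I`.
    let c : V n := fun l => if SameSegment I i l then 1 else 0
    have hc : ∀ w ∈ alphaA n '' (I : Set (Fin n)), inn c w = 0 := by
      rintro _ ⟨k, hk, rfl⟩
      rcases alphaA_eq_zero_or_exists_covBy k with hk0 | ⟨l, hkl⟩
      · simp [hk0, inn]
      · have hseg := sameSegment_of_covBy (Finset.mem_coe.mp hk) hkl
        have hiff : SameSegment I i k ↔ SameSegment I i l :=
          ⟨fun h => h.trans hseg, fun h => h.trans hseg.symm⟩
        simp [alphaA_of_covBy hkl, inn_ee_sub_ee, c, hiff]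
    have hpair := inn_eq_zero_of_mem_span hc hmem
    by_contra hij
    simp [inn_ee_sub_ee, c, hij, SameSegment.refl] at hpair
  · intro h
    induction h with
    | rel i j hij =>
      rw [← alphaA_of_covBy hij.2]
      exact Submodule.subset_span (Set.mem_image_of_mem _ hij.1)
    | refl => simp
    | symm _ _ _ ih => simpa using Submodule.neg_mem _ ih
    | trans _ _ _ _ _ ih₁ ih₂ => simpa using Submodule.add_mem _ ih₁ ih₂

theorem ee_sub_ee_mem_PhiI_iff (hij : i ≠ j) : ee i - ee j ∈ PhiI n I ↔ SameSegment I i j := by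
  rw [← ee_sub_ee_mem_span_iff]
  exact and_iff_right ⟨i, j, hij, rfl⟩

theorem regI_iff_forall_sameSegment :
    RegI n I x ↔ ∀ i j, SameSegment I i j → x i = x j → i = j := by
  constructor
  · intro hreg i j hseg hx
    by_contra hij
    exact hreg _ ((ee_sub_ee_mem_PhiI_iff hij).mpr hseg) (by rw [inn_ee_sub_ee, hx, sub_self])
  · rintro hinj _ ⟨⟨i, j, hij, rfl⟩, hspan⟩ hpair
    rw [inn_ee_sub_ee, sub_eq_zero] at hpair
    exact hij (hinj i j (ee_sub_ee_mem_span_iff.mp hspan) hpair)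

/-- The subgroup `W_I` of `S_n` in terms of its orbits: the permutations `σ` such that `x ∘ σ`
lies in `W_I x` for every weight `x`. -/
def parabolicPerms (I : Finset (Fin n)) : Submonoid (Equiv.Perm (Fin n)) where
  carrier := {σ | ∀ x : V n, WIOrb n I x (x ∘ σ)}
  one_mem' _ := Relation.ReflTransGen.refl
  mul_mem' hσ hτ x := (hσ x).trans (hτ _)

theorem SameSegment.swap_mem_parabolicPerms (h : SameSegment I i j) :
    Equiv.swap i j ∈ parabolicPerms I := by
  induction h with
  | rel i j hij =>
    exact fun x => Relation.ReflTransGen.single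
      ⟨i, hij.1, by rw [alphaA_of_covBy hij.2, sRefl_ee_sub_ee x hij.2.ne]⟩
  | refl i => rw [Equiv.swap_self]; exact one_mem _
  | symm i j _ ih => rwa [Equiv.swap_comm]
  | trans _ _ _ _ _ ih₁ ih₂ => exact SubmonoidClass.swap_mem_trans _ ih₁ ih₂

end Segments

section Moves

variable {n : ℕ} {I : Finset (Fin n)} {p r : Fin n} {x y z : V n}

theorem ConnA.refl (hx : RegI n I x) : ConnA n I x x := ⟨hx, hx, Relation.ReflTransGen.refl⟩

theorem ConnA.tail (hxy : ConnA n I x y) (hyz : ConnStepA n I y z) : ConnA n I x z :=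
  ⟨hxy.1, hyz.2.1, hxy.2.2.tail hyz⟩

theorem connStepA_swap_of_sameSegment (hx : RegI n I x) (hpr : SameSegment I p r) :
    ConnStepA n I x (x ∘ Equiv.swap p r) := by
  refine ⟨hx, ?_, Or.inl (hpr.swap_mem_parabolicPerms x)⟩
  have hswap : ∀ k, SameSegment I (Equiv.swap p r k) k := by
    intro k
    rcases eq_or_ne k p with rfl | hkp
    · simpa using hpr.symm
    rcases eq_or_ne k r with rfl | hkr
    · simpa using hpr
    · rw [Equiv.swap_apply_of_ne_of_ne hkp hkr]
      exact SameSegment.refl k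
  rw [regI_iff_forall_sameSegment] at hx ⊢
  intro i j hij heq
  exact (Equiv.swap p r).injective
    (hx _ _ ((hswap i).trans (hij.trans (hswap j).symm)) heq)

theorem RegI.comp_swap (hx : RegI n I x) (hp : ∀ k, SameSegment I p k → x k ≠ x r)
    (hr : ∀ k, SameSegment I r k → x k ≠ x p) : RegI n I (x ∘ Equiv.swap p r) := by
  rw [regI_iff_forall_sameSegment] at hx ⊢
  intro i j hij heq
  have hji := hij.symm
  simp only [Function.comp_apply, Equiv.swap_apply_def] at heq
  grind

theorem connStepA_swap_of_forall_ne (hx : RegI n I x) (hp : ∀ k, SameSegment I p k → x k ≠ x r)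
    (hr : ∀ k, SameSegment I r k → x k ≠ x p) : ConnStepA n I x (x ∘ Equiv.swap p r) := by
  wlog hlt : p < r generalizing p r
  · have hne : r ≠ p := fun h => hp p (SameSegment.refl p) (by rw [h])
    rw [Equiv.swap_comm]
    exact this hr hp (lt_of_le_of_ne (not_lt.mp hlt) hne)
  have hreg := hx.comp_swap hp hr
  have hrefl := sRefl_ee_sub_ee x hlt.ne
  have hmoved : x ∘ Equiv.swap p r ≠ x := fun h =>
    hp p (SameSegment.refl p) (by simpa using (congrFun h p).symm)
  have hlinked : LinkedA n I x (ee p - ee r) :=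
    ⟨hx, ⟨p, r, hlt, rfl⟩, fun h => hp r ((ee_sub_ee_mem_PhiI_iff hlt.ne).mp h) rfl,
      by rwa [hrefl], by rwa [hrefl]⟩
  exact ⟨hx, hreg, Or.inr ⟨_, hlinked, hrefl ▸ Relation.ReflTransGen.refl⟩⟩

/-- The number of entries of `x` equal to `a`, that is, the sum over `s` of the paper's
`n_s^x(a)`. -/
noncomputable def entryCount (x : V n) (a : ℝ) : ℕ := (Finset.univ.filter fun i => x i = a).card

theorem entryCount_comp_perm (x : V n) (σ : Equiv.Perm (Fin n)) (a : ℝ) :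
    entryCount (x ∘ σ) a = entryCount x a :=
  Finset.card_equiv σ (by simp)

theorem exists_forall_sameSegment_ne (hx : RegI n I x) {a : ℝ}
    (ha : ∀ k, SameSegment I p k → x k ≠ a) (hcount : entryCount x (x p) ≤ entryCount x a) :
    ∃ r, x r = a ∧ ∀ k, SameSegment I r k → x k ≠ x p := by
  -- Otherwise each occurrence of `a` shares its segment with an occurrence of `x p` other than `p`;
  -- by regularity different occurrences of `a` lie in different segments.
  by_contra! hcon
  choose! g hgseg hgval using hcon
  refine hcount.not_gt ((Finset.card_le_card_of_injOn
    (t := (Finset.univ.filter fun i => x i = x p).erase p) g ?_ ?_).trans_lt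
    (Finset.card_erase_lt_of_mem (by simp)))
  · intro r hr
    have hra : x r = a := by simpa using hr
    have hgp : g r ≠ p := fun h => ha r (h ▸ (hgseg r hra).symm) hra
    simpa [hgp] using hgval r hra
  · intro r hr s hs hrs
    have hra : x r = a := by simpa using hr
    have hsa : x s = a := by simpa using hs
    exact regI_iff_forall_sameSegment.mp hx r s
      ((hgseg r hra).trans (hrs ▸ (hgseg s hsa).symm)) (hra.trans hsa.symm)

theorem exists_connStepA_swap (hx : RegI n I x) (p : Fin n) {a : ℝ}
    (hcount : entryCount x (x p) ≤ entryCount x a) :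
    ∃ r, x r = a ∧ ConnStepA n I x (x ∘ Equiv.swap p r) := by
  by_cases ha : ∃ r, SameSegment I p r ∧ x r = a
  · obtain ⟨r, hpr, hra⟩ := ha
    exact ⟨r, hra, connStepA_swap_of_sameSegment hx hpr⟩
  · push Not at ha
    obtain ⟨r, rfl, hr⟩ := exists_forall_sameSegment_ne hx ha hcount
    exact ⟨r, rfl, connStepA_swap_of_forall_ne hx ha hr⟩

end Moves

section Prefix

variable {n : ℕ} {I : Finset (Fin n)} {x : V n} {b : ℕ → ℝ} {m : ℕ}

theorem exists_connStepA_extend_prefix (hx : RegI n I x) (hinj : Set.InjOn b (Set.Icc 1 m))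
    (hval : ∀ i, x i ∈ b '' Set.Icc 1 m)
    (hanti : AntitoneOn (fun k => entryCount x (b k)) (Set.Icc 1 m)) {p : Fin n}
    (hseg : ∀ i < p, SameSegment I i p) (hprefix : ∀ i < p, x i = b (i + 1)) :
    ∃ σ : Equiv.Perm (Fin n), ConnStepA n I x (x ∘ σ) ∧ ∀ i ≤ p, x (σ i) = b (i + 1) := by
  obtain ⟨k, hk, hbk⟩ := hval p
  -- The values `b 1, …, b p` (with `p` counted from `0`) are used up in the segment of `p`.
  have hpk : p.1 + 1 ≤ k := by
    by_contra! hkp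
    obtain ⟨l, rfl⟩ := Nat.exists_eq_add_of_le' hk.1
    have hlp : l < p.1 := Nat.lt_of_succ_lt_succ hkp
    let i : Fin n := ⟨l, hlp.trans p.2⟩
    have hip : i < p := hlp
    exact hip.ne (regI_iff_forall_sameSegment.mp hx i p (hseg i hip) ((hprefix i hip).trans hbk))
  have hpm : p.1 + 1 ∈ Set.Icc 1 m := ⟨Nat.le_add_left 1 p, hpk.trans hk.2⟩
  obtain ⟨r, hr, hstep⟩ :=
    exists_connStepA_swap hx p (a := b (p + 1)) (hbk ▸ hanti hpm hk hpk)
  have hpr : p ≤ r := by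
    by_contra! hrp
    have hrm : r.1 + 1 ∈ Set.Icc 1 m :=
      ⟨Nat.le_add_left 1 r, (Nat.succ_le_succ (Fin.le_def.mp hrp.le)).trans hpm.2⟩
    exact hrp.ne (Fin.ext (Nat.succ_injective (hinj hrm hpm ((hprefix r hrp).symm.trans hr))))
  refine ⟨Equiv.swap p r, hstep, fun i hi => ?_⟩
  rcases hi.eq_or_lt with rfl | hip
  · rwa [Equiv.swap_apply_left]
  · rw [Equiv.swap_apply_of_ne_of_ne hip.ne (hip.trans_le hpr).ne, hprefix i hip]

theorem exists_connA_prefix_eq (hx : RegI n I x) (hinj : Set.InjOn b (Set.Icc 1 m))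
    (hval : ∀ i, x i ∈ b '' Set.Icc 1 m)
    (hanti : AntitoneOn (fun k => entryCount x (b k)) (Set.Icc 1 m)) {q : ℕ}
    (hseg : ∀ i j : Fin n, i.1 < q → j.1 < q → SameSegment I i j) :
    ∃ y, ConnA n I x y ∧ ∀ i : Fin n, i.1 < q → y i = b (i + 1) := by
  suffices hfill : ∀ p ≤ q, ∃ σ : Equiv.Perm (Fin n), ConnA n I x (x ∘ σ) ∧
      ∀ i : Fin n, i.1 < p → x (σ i) = b (i + 1) by
    obtain ⟨σ, hσ⟩ := hfill q le_rfl
    exact ⟨x ∘ σ, hσ⟩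
  intro p
  induction p with
  | zero => exact fun _ => ⟨1, ConnA.refl hx, by simp⟩
  | succ p ih =>
    intro hpq
    obtain ⟨σ, hconn, hprefix⟩ := ih (Nat.le_of_succ_le hpq)
    rcases lt_or_ge p n with hpn | hnp
    · obtain ⟨τ, hstep, hτ⟩ := exists_connStepA_extend_prefix (p := ⟨p, hpn⟩) hconn.2.1 hinj
        (fun i => hval (σ i)) (by simpa only [entryCount_comp_perm] using hanti)
        (fun i hi => hseg i _ (lt_trans hi hpq) hpq) hprefix
      exact ⟨σ * τ, hconn.tail hstep, fun i hi => hτ i (Nat.le_of_lt_succ hi)⟩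
    · exact ⟨σ, hconn, fun i _ => hprefix i (i.2.trans_le hnp)⟩

end Prefix

section Breakpoints

variable {n : ℕ} {J : Finset (Fin n)} {s t : ℕ} {i j : Fin n}

@[simp]
theorem qA_zero (n : ℕ) (J : Finset (Fin n)) : qA n J 0 = 0 := rfl

@[simp]
theorem qA_mvalA (n : ℕ) (J : Finset (Fin n)) : qA n J (mvalA n J) = n := by
  simp [qA, mvalA]

theorem qA_eq_getElem (hs : s < (0 :: (QlistA n J ++ [n])).length) :
    qA n J s = (0 :: (QlistA n J ++ [n]))[s] := by
  rcases s with _ | s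
  · rfl
  · simp only [qA, mvalA, List.getElem_cons_succ, List.getElem_append]
    grind

theorem mem_QlistA {a : ℕ} : a ∈ QlistA n J ↔ ∃ j : Fin n, j.1 + 1 < n ∧ j ∉ J ∧ j.1 + 1 = a := by
  simp [QlistA, and_assoc]

theorem pairwise_lt_QlistA (n : ℕ) (J : Finset (Fin n)) : (QlistA n J).Pairwise (· < ·) := by
  rw [QlistA, List.pairwise_map]
  exact (Finset.sortedLT_sort _).pairwise.imp (by simp)

theorem strictMonoOn_qA (hn : 0 < n) : StrictMonoOn (qA n J) (Set.Iic (mvalA n J)) := by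
  have hpair : (0 :: (QlistA n J ++ [n])).Pairwise (· < ·) := by
    simp only [List.pairwise_cons, List.pairwise_append, List.mem_append, mem_QlistA]
    grind [pairwise_lt_QlistA]
  intro s hs t ht hst
  have hlen : (0 :: (QlistA n J ++ [n])).length = mvalA n J + 1 := by simp [mvalA]
  rw [Set.mem_Iic] at hs ht
  rw [qA_eq_getElem (by omega), qA_eq_getElem (by omega)]
  exact List.pairwise_iff_getElem.mp hpair _ _ _ _ hst

theorem exists_qA_eq_iff :
    (∃ s ∈ Set.Ico 1 (mvalA n J), qA n J s = j.1 + 1) ↔ j.1 + 1 < n ∧ j ∉ J := by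
  have hmem : j.1 + 1 ∈ QlistA n J ↔ j.1 + 1 < n ∧ j ∉ J := by
    simp [mem_QlistA, Fin.val_inj]
  rw [← hmem, List.mem_iff_getElem]
  constructor
  · rintro ⟨s, ⟨hs, hsm⟩, hqs⟩
    obtain ⟨s, rfl⟩ := Nat.exists_eq_add_of_le' hs
    have hlen : s < (QlistA n J).length := Nat.succ_lt_succ_iff.mp hsm
    exact ⟨s, hlen, by simpa [qA, hsm, hlen] using hqs⟩
  · rintro ⟨s, hs, hqs⟩
    exact ⟨s + 1, ⟨by omega, Nat.succ_lt_succ hs⟩, by simp [qA, mvalA, hs, hqs]⟩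

theorem qA_le (hn : 0 < n) (ht : t ≤ mvalA n J) : qA n J t ≤ n :=
  ((strictMonoOn_qA hn).monotoneOn ht Set.self_mem_Iic ht).trans_eq (qA_mvalA n J)

theorem sameSegment_of_mem_Ico_qA (ht : t ∈ Set.Icc 1 (mvalA n J))
    (hi : i.1 ∈ Set.Ico (qA n J (t - 1)) (qA n J t))
    (hj : j.1 ∈ Set.Ico (qA n J (t - 1)) (qA n J t)) : SameSegment J i j := by
  wlog hij : i ≤ j generalizing i j
  · exact (this hj hi (le_of_not_ge hij)).symm
  refine sameSegment_of_Ico_subset hij fun k ⟨hik, hkj⟩ => ?_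
  by_contra hk
  obtain ⟨s, ⟨_, hsm⟩, hqs⟩ := exists_qA_eq_iff.mpr ⟨lt_of_le_of_lt hkj j.2, hk⟩
  have hmono := strictMonoOn_qA (J := J) i.pos
  have hts : t - 1 < s := (hmono.lt_iff_lt ((Nat.sub_le t 1).trans ht.2) hsm.le).mp
    (by rw [hqs]; exact Nat.lt_succ_of_le (hi.1.trans hik))
  have hst : s < t := (hmono.lt_iff_lt hsm.le ht.2).mp
    (by rw [hqs]; exact lt_of_le_of_lt hkj hj.2)
  omega

theorem sameSegment_of_lt_qA_one (hi : i.1 < qA n J 1) (hj : j.1 < qA n J 1) :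
    SameSegment J i j :=
  sameSegment_of_mem_Ico_qA ⟨le_rfl, Nat.le_add_left 1 _⟩ ⟨Nat.zero_le _, hi⟩ ⟨Nat.zero_le _, hj⟩

theorem exists_mem_Ico_qA (J : Finset (Fin n)) (i : Fin n) :
    ∃ t ∈ Set.Icc 1 (mvalA n J), i.1 ∈ Set.Ico (qA n J (t - 1)) (qA n J t) := by
  have hex : ∃ t, i.1 < qA n J t := ⟨mvalA n J, by simp⟩
  have hpos : Nat.find hex ≠ 0 := by simp
  exact ⟨Nat.find hex, ⟨Nat.one_le_iff_ne_zero.mpr hpos, Nat.find_min' hex (by simp)⟩,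
    not_lt.mp (Nat.find_min hex (Nat.pred_lt hpos)), Nat.find_spec hex⟩

theorem card_filter_val_mem_Ico {a b : ℕ} (hb : b ≤ n) :
    (Finset.univ.filter fun i : Fin n => i.1 ∈ Set.Ico a b).card = b - a := by
  rw [← Nat.card_Ico a b, ← Finset.card_map Fin.valEmbedding]
  refine congrArg Finset.card (Finset.ext fun c => ?_)
  simp only [Finset.mem_map, Finset.mem_filter, Finset.mem_univ, true_and, Finset.mem_Ico,
    Set.mem_Ico, Fin.valEmbedding_apply]
  exact ⟨fun ⟨_, hi, hic⟩ => hic ▸ hi, fun hc => ⟨⟨c, hc.2.trans_le hb⟩, hc, rfl⟩⟩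

end Breakpoints

section DominantWeights

variable {n : ℕ} {J : Finset (Fin n)} {lbar : V n} {t : ℕ} {i : Fin n}

theorem aA_eq_apply (hi : i.1 + 1 = qA n J t) : aA n J lbar t = lbar i := by
  simp [aA, ← hi]

theorem apply_eq_aA (hJ : ∀ k ∈ J, inn lbar (alphaA n k) = 0) (ht : t ∈ Set.Icc 1 (mvalA n J))
    (hi : i.1 ∈ Set.Ico (qA n J (t - 1)) (qA n J t)) : lbar i = aA n J lbar t := by
  obtain ⟨hqi, hiq⟩ := hi
  have hqn : qA n J t ≤ n := qA_le i.pos ht.2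
  let j : Fin n := ⟨qA n J t - 1, by omega⟩
  have hj : j.1 + 1 = qA n J t := by simp only [j]; omega
  rw [aA_eq_apply hj]
  exact (sameSegment_of_mem_Ico_qA ht ⟨hqi, hiq⟩ ⟨by omega, by omega⟩).apply_eq hJ

theorem strictAntiOn_aA (hn : 0 < n) (hdom : DominantW n lbar)
    (hJ : ∀ i : Fin n, i.1 + 1 < n → inn lbar (alphaA n i) = 0 → i ∈ J) :
    StrictAntiOn (aA n J lbar) (Set.Icc 1 (mvalA n J)) := by
  intro s hs t ht hst
  have hmono := strictMonoOn_qA (J := J) hn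
  have hq0 : 0 < qA n J s := by simpa using hmono (Nat.zero_le _) hs.2 hs.1
  have hqst : qA n J s < qA n J t := hmono hs.2 ht.2 hst
  have hqtn : qA n J t ≤ n := qA_le hn ht.2
  let i : Fin n := ⟨qA n J s - 1, by omega⟩
  let i' : Fin n := ⟨qA n J s, by omega⟩
  let j : Fin n := ⟨qA n J t - 1, by omega⟩
  have hi : i.1 + 1 = qA n J s := by simp only [i]; omega
  have hii' : i ⋖ i' := Fin.covBy_iff.mpr (Nat.covBy_iff_add_one_eq.mpr hi)
  have hiJ : i ∉ J := (exists_qA_eq_iff.mp ⟨s, ⟨hs.1, hst.trans_le ht.2⟩, hi.symm⟩).2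
  have hne : lbar i ≠ lbar i' := fun h => hiJ <| hJ i (by omega) <| by
    rw [alphaA_of_covBy hii', inn_ee_sub_ee, h, sub_self]
  have hi'j : i' ≤ j := Nat.le_sub_one_of_lt hqst
  rw [aA_eq_apply (i := j) (by simp only [j]; omega), aA_eq_apply hi]
  exact (hdom.antitone hi'j).trans_lt (lt_of_le_of_ne (hdom.antitone hii'.le) hne.symm)

theorem apply_eq_aA_iff (hdom : DominantW n lbar) (hJ : ∀ k ∈ J, inn lbar (alphaA n k) = 0)
    (hJ' : ∀ k : Fin n, k.1 + 1 < n → inn lbar (alphaA n k) = 0 → k ∈ J)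
    (ht : t ∈ Set.Icc 1 (mvalA n J)) :
    lbar i = aA n J lbar t ↔ i.1 ∈ Set.Ico (qA n J (t - 1)) (qA n J t) := by
  refine ⟨fun hit => ?_, apply_eq_aA hJ ht⟩
  obtain ⟨s, hs, his⟩ := exists_mem_Ico_qA J i
  have hst : s = t := (strictAntiOn_aA i.pos hdom hJ').injOn hs ht
    ((apply_eq_aA hJ hs his).symm.trans hit)
  exact hst ▸ his

theorem entryCount_aA (hn : 0 < n) (hdom : DominantW n lbar)
    (hJ : ∀ k ∈ J, inn lbar (alphaA n k) = 0)
    (hJ' : ∀ k : Fin n, k.1 + 1 < n → inn lbar (alphaA n k) = 0 → k ∈ J)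
    (ht : t ∈ Set.Icc 1 (mvalA n J)) : entryCount lbar (aA n J lbar t) = nbarA n J t := by
  simp only [entryCount, apply_eq_aA_iff hdom hJ hJ' ht, nbarA,
    card_filter_val_mem_Ico (qA_le hn ht.2)]

theorem apply_mem_image_aA (hJ : ∀ k ∈ J, inn lbar (alphaA n k) = 0) (i : Fin n) :
    lbar i ∈ aA n J lbar '' Set.Icc 1 (mvalA n J) := by
  obtain ⟨t, ht, hit⟩ := exists_mem_Ico_qA J i
  exact ⟨t, ht, (apply_eq_aA hJ ht hit).symm⟩

end DominantWeights

theorem statement12_general (n : ℕ) (I J : Finset (Fin n)) (lam lbar : V n)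
    (_hIidx : ∀ i ∈ I, i.1 + 1 < n) (hJidx : ∀ j ∈ J, j.1 + 1 < n) (hreg : RegI n I lam)
    (horb : WOrb n lam lbar) (hdom : DominantW n lbar)
    (hJ : ∀ i : Fin n, i.1 + 1 < n → (i ∈ J ↔ inn lbar (alphaA n i) = 0))
    (ii : ℕ → ℕ)
    (hbij : Set.BijOn ii (Set.Icc 1 (mvalA n J)) (Set.Icc 1 (mvalA n J)))
    (hmono : ∀ s t : ℕ, 1 ≤ s → s ≤ t → t ≤ mvalA n J →
      nbarA n J (ii t) ≤ nbarA n J (ii s)) :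
    ∃ lamhat : V n, RegI n I lamhat ∧
      (∀ i : Fin n, i.1 + 1 ≤ qA n I 1 → lamhat i = aA n J lbar (ii (i.1 + 1))) ∧
      ConnA n I lam lamhat := by
  rcases n.eq_zero_or_pos with rfl | hn
  · exact ⟨lam, hreg, fun i => i.elim0, ConnA.refl hreg⟩
  have hJzero : ∀ k ∈ J, inn lbar (alphaA n k) = 0 := fun k hk => (hJ k (hJidx k hk)).mp hk
  have hJmem : ∀ k : Fin n, k.1 + 1 < n → inn lbar (alphaA n k) = 0 → k ∈ J :=
    fun k hk => (hJ k hk).mpr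
  obtain ⟨σ, hσ⟩ := horb.exists_eq_comp_perm
  have hinj : Set.InjOn (aA n J lbar ∘ ii) (Set.Icc 1 (mvalA n J)) :=
    (strictAntiOn_aA hn hdom hJmem).injOn.comp hbij.injOn hbij.mapsTo
  have hval : ∀ i, lam i ∈ (aA n J lbar ∘ ii) '' Set.Icc 1 (mvalA n J) := fun i => by
    rw [Set.image_comp, hbij.image_eq]
    simpa [hσ] using apply_mem_image_aA hJzero (σ⁻¹ i)
  have hcount : Set.EqOn (fun s => entryCount lam ((aA n J lbar ∘ ii) s)) (nbarA n J ∘ ii)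
      (Set.Icc 1 (mvalA n J)) := fun s hs => by
    simp only [Function.comp_apply, ← entryCount_aA hn hdom hJzero hJmem (hbij.mapsTo hs)]
    rw [hσ, entryCount_comp_perm]
  have hanti : AntitoneOn (nbarA n J ∘ ii) (Set.Icc 1 (mvalA n J)) :=
    fun s hs t ht hst => hmono s t hs.1 hst ht.2
  obtain ⟨lamhat, hconn, hprefix⟩ := exists_connA_prefix_eq hreg hinj hval
    (hanti.congr hcount.symm) (fun _ _ => sameSegment_of_lt_qA_one)
  exact ⟨lamhat, hconn.2.1, hprefix, hconn⟩

/-- Lemma 6.10 / `bkswlem1`. -/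
theorem statement12 (n : ℕ) (I J : Finset (Fin n)) (lam lbar : V n)
    (hIidx : ∀ i ∈ I, i.1 + 1 < n) (hJidx : ∀ j ∈ J, j.1 + 1 < n)
    (hint : IntegralW n lam) (hreg : RegI n I lam)
    (horb : WOrb n lam lbar) (hdom : DominantW n lbar)
    (hJ : ∀ i : Fin n, i.1 + 1 < n → (i ∈ J ↔ inn lbar (alphaA n i) = 0))
    (ii : ℕ → ℕ)
    (hbij : Set.BijOn ii (Set.Icc 1 (mvalA n J)) (Set.Icc 1 (mvalA n J)))
    (hmono : ∀ s t : ℕ, 1 ≤ s → s ≤ t → t ≤ mvalA n J →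
      nbarA n J (ii t) ≤ nbarA n J (ii s)) :
    ∃ lamhat : V n, RegI n I lamhat ∧
      (∀ i : Fin n, i.1 + 1 ≤ qA n I 1 → lamhat i = aA n J lbar (ii (i.1 + 1))) ∧
      ConnA n I lam lamhat :=
  statement12_general n I J lam lbar hIidx hJidx hreg horb hdom hJ ii hbij hmono

end JantzenBlocksA
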